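/- Let V be a finite-dimensional real vector space with a symplectic form ω, and let c : V → V be a linear anti-symplectic involution. Consider the set ℝ𝒥 = { J : V → V linear | J ∘ J = −id, ω(v, J v) > 0 for all v ≠ 0, and c ∘ J = −J ∘ c }, topologized as a subspace of the space of continuous linear endomorphisms of V. Then ℝ𝒥 is non-empty and contractible. (Linear version of Proposition 1.1: ℝ𝒥_ω is a non-empty contractible space.) -/

import Mathlib

set_option maxHeartbeats 1000000 in
theorem exists_compatible_real_structure
    (V : Type*) [NormedAddCommGroup V] [NormedSpace ℝ V] [FiniteDimensional ℝ V]
    (ω : V →ₗ[ℝ] V →ₗ[ℝ] ℝ)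
    (halt : ∀ v : V, ω v v = 0)
    (hnondeg : ∀ v : V, (∀ w : V, ω v w = 0) → v = 0)
    (c : V →ₗ[ℝ] V) (hc : ∀ v : V, c (c v) = v)
    (hanti : ∀ u v : V, ω (c u) (c v) = - ω u v) :
    ∃ j : V →L[ℝ] V, (∀ v, j (j v) = -v) ∧ (∀ v, v ≠ 0 → 0 < ω v (j v)) ∧
      (∀ v, c (j v) = - j (c v)) ∧ (∀ u v, ω u (j v) = ω v (j u)) := by
  have hskew : ∀ u v, ω u v = - ω v u := by
    intro u v
    have h := halt (u + v)
    simp only [map_add, LinearMap.add_apply, halt] at h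
    linarith
  let P : Submodule ℝ V := LinearMap.ker (c - LinearMap.id)
  let Q : Submodule ℝ V := LinearMap.ker (c + LinearMap.id)
  have hP : ∀ v, v ∈ P ↔ c v = v := by
    intro v; simp [P, LinearMap.mem_ker, sub_eq_zero]
  have hQ : ∀ v, v ∈ Q ↔ c v = -v := by
    intro v; simp [Q, LinearMap.mem_ker, add_eq_zero_iff_eq_neg]
  have hPP : ∀ u ∈ P, ∀ v ∈ P, ω u v = 0 := by
    intro u hu v hv
    have h := hanti u v
    rw [(hP u).1 hu, (hP v).1 hv] at h
    linarith
  have hQQ : ∀ u ∈ Q, ∀ v ∈ Q, ω u v = 0 := by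
    intro u hu v hv
    have h := hanti u v
    rw [(hQ u).1 hu, (hQ v).1 hv] at h
    simp at h
    linarith
  let πP : V →ₗ[ℝ] P := LinearMap.codRestrict P ((1/2 : ℝ) • (LinearMap.id + c)) (by
    intro v
    rw [hP]
    simp [hc, add_comm])
  let πQ : V →ₗ[ℝ] Q := LinearMap.codRestrict Q ((1/2 : ℝ) • (LinearMap.id - c)) (by
    intro v
    rw [hQ]
    simp [hc, ← smul_neg])
  have hsum : ∀ v, ((πP v : P) : V) + ((πQ v : Q) : V) = v := by
    intro v
    simp [πP, πQ]
    module
  have hπPP : ∀ p : P, πP p = p := by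
    intro p; ext
    simp [πP, (hP p).1 p.2]; module
  have hπPQ : ∀ p : Q, πP p = 0 := by
    intro p; ext
    simp [πP, (hQ p).1 p.2]
  have hπQP : ∀ p : P, πQ p = 0 := by
    intro p; ext
    simp [πQ, (hP p).1 p.2]
  have hπQQ : ∀ p : Q, πQ p = p := by
    intro p; ext
    simp [πQ, (hQ p).1 p.2]; module
  -- the pairing
  let L : Q →ₗ[ℝ] Module.Dual ℝ P := (ω.flip.compl₁₂ Q.subtype P.subtype)
  let L' : P →ₗ[ℝ] Module.Dual ℝ Q := (ω.compl₁₂ P.subtype Q.subtype)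
  have hL : ∀ (q : Q) (p : P), L q p = ω p q := fun q p => rfl
  have hL' : ∀ (q : Q) (p : P), L' p q = ω p q := fun q p => rfl
  have hLi : Function.Injective L := by
    rw [injective_iff_map_eq_zero]
    intro q hq
    ext
    apply hnondeg
    intro w
    rw [← hsum w, map_add, hQQ _ q.2 _ (πQ w).2, hskew, ← hL, hq]
    simp
  have hLi' : Function.Injective L' := by
    rw [injective_iff_map_eq_zero]
    intro q hq
    ext
    apply hnondeg
    intro w
    rw [← hsum w, map_add, hPP _ q.2 _ (πP w).2, ← hL', hq]
    simp
  have hd1 := LinearMap.finrank_le_finrank_of_injective hLi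
  have hd2 := LinearMap.finrank_le_finrank_of_injective hLi'
  rw [Subspace.dual_finrank_eq] at hd1 hd2
  have hd : Module.finrank ℝ P = Module.finrank ℝ Q := le_antisymm hd2 hd1
  let Le : Q ≃ₗ[ℝ] Module.Dual ℝ P := LinearMap.linearEquivOfInjective L hLi
    (by rw [Subspace.dual_finrank_eq, hd])
  have hLe : ∀ (q : Q) (p : P), Le q p = ω p q := fun q p => rfl
  let b := Module.finBasis ℝ P
  let T0 : P →ₗ[ℝ] Q := Le.symm.toLinearMap ∘ₗ b.toDual
  have hT0 : ∀ p p' : P, ω p (T0 p') = ∑ i, b.repr p i * b.repr p' i := by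
    intro p p'
    rw [← hLe]
    simp only [T0, LinearMap.comp_apply, LinearEquiv.coe_coe, LinearEquiv.apply_symm_apply]
    conv_lhs => rw [← b.sum_repr p, map_sum]
    refine Finset.sum_congr rfl (fun i _ => ?_)
    rw [map_smul, smul_eq_mul, Module.Basis.toDual_apply_left]
  have hT0i : Function.Injective T0 := by
    rw [injective_iff_map_eq_zero]
    intro p hp
    have := hT0 p p
    rw [hp] at this
    simp only [Submodule.coe_zero, map_zero] at this
    rw [eq_comm, Finset.sum_eq_zero_iff_of_nonneg (fun i _ => mul_self_nonneg _)] at this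
    apply b.repr.injective
    ext i
    simpa using this i (Finset.mem_univ i)
  have hpos : ∀ p : P, p ≠ 0 → 0 < ω p (T0 p) := by
    intro p hp
    have h0 : 0 ≤ ω p (T0 p) := by
      rw [hT0]; exact Finset.sum_nonneg (fun i _ => mul_self_nonneg _)
    refine lt_of_le_of_ne h0 (fun h => hp ?_)
    rw [hT0, eq_comm, Finset.sum_eq_zero_iff_of_nonneg (fun i _ => mul_self_nonneg _)] at h
    apply b.repr.injective
    ext i
    simpa using h i (Finset.mem_univ i)
  have hnn : ∀ p : P, 0 ≤ ω p (T0 p) := by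
    intro p
    rw [hT0]; exact Finset.sum_nonneg (fun i _ => mul_self_nonneg _)
  let T : P ≃ₗ[ℝ] Q := LinearMap.linearEquivOfInjective T0 hT0i hd
  have hT : ∀ p : P, T p = T0 p := fun p => rfl
  have hsymT : ∀ p p' : P, ω p (T p') = ω p' (T p) := by
    intro p p'
    rw [hT, hT, hT0, hT0]
    exact Finset.sum_congr rfl (fun i _ => mul_comm _ _)
  let j0 : V →ₗ[ℝ] V := P.subtype ∘ₗ (-(T.symm.toLinearMap ∘ₗ πQ)) + Q.subtype ∘ₗ (T.toLinearMap ∘ₗ πP)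
  have hj0 : ∀ v, j0 v = -((T.symm (πQ v) : P) : V) + ((T (πP v) : Q) : V) := by
    intro v; simp [j0]
  have hg : ∀ u v, ω u (j0 v) = ω (πP u) (T (πP v)) + ω (T.symm (πQ u)) (T (T.symm (πQ v))) := by
    intro u v
    conv_lhs => rw [← hsum u, hj0]
    simp only [map_add, LinearMap.add_apply, map_neg]
    rw [hPP _ (πP u).2 _ (T.symm (πQ v)).2, hQQ _ (πQ u).2 _ (T (πP v)).2, hsymT (T.symm (πQ u)),
      hskew (πQ u) (T.symm (πQ v)), LinearEquiv.apply_symm_apply]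
    ring
  refine ⟨LinearMap.toContinuousLinearMap j0, ?_, ?_, ?_, ?_⟩
  · intro v
    simp only [LinearMap.coe_toContinuousLinearMap']
    rw [hj0 v, hj0]
    simp only [map_add, map_neg, hπPP, hπPQ, hπQP, hπQQ]
    conv_rhs => rw [← hsum v]
    simp
    exact add_comm _ _
  · intro v hv
    simp only [LinearMap.coe_toContinuousLinearMap']
    rw [hg]
    by_cases h : πP v = 0
    · have h2 : T.symm (πQ v) ≠ 0 := by
        intro h3
        rw [LinearEquiv.map_eq_zero_iff] at h3
        apply hv
        rw [← hsum v, h, h3]; simp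
      have := hpos _ h2
      have := hnn (πP v)
      rw [hT, hT]; linarith
    · have := hpos _ h
      have := hnn (T.symm (πQ v))
      rw [hT, hT]; linarith
  · intro v
    simp only [LinearMap.coe_toContinuousLinearMap']
    have h1 : πP (c v) = πP v := by ext; simp [πP, hc, add_comm]
    have h2 : πQ (c v) = - πQ v := by ext; simp [πQ, hc, ← smul_neg]
    rw [hj0, hj0, h1, h2, map_add, map_neg, (hP _).1 (Subtype.prop _), (hQ _).1 (Subtype.prop _)]
    simp
    exact add_comm _ _
  · intro u v
    simp only [LinearMap.coe_toContinuousLinearMap']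
    rw [hg, hg, hsymT, hsymT (T.symm (πQ u))]

/-- Let `V` be a finite-dimensional real vector space with a symplectic form
`ω`, and let `c : V → V` be a linear anti-symplectic involution. Consider the set
`ℝ𝒥 = {J | J ∘ J = −id, ω(v, J v) > 0 for all v ≠ 0, c ∘ J = −J ∘ c}`, topologized as a
subspace of the space of continuous linear endomorphisms of `V`. Then `ℝ𝒥` is non-empty and
contractible. -/
theorem real_tamed_complex_structures_nonempty_contractible
    (V : Type*) [NormedAddCommGroup V] [NormedSpace ℝ V] [FiniteDimensional ℝ V]
    (ω : V →ₗ[ℝ] V →ₗ[ℝ] ℝ)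
    (halt : ∀ v : V, ω v v = 0)
    (hnondeg : ∀ v : V, (∀ w : V, ω v w = 0) → v = 0)
    (c : V →ₗ[ℝ] V) (hc : ∀ v : V, c (c v) = v)
    (hanti : ∀ u v : V, ω (c u) (c v) = - ω u v)
    (S : Set (V →L[ℝ] V))
    (hS : ∀ J : V →L[ℝ] V, J ∈ S ↔
      ((∀ v : V, J (J v) = -v) ∧
       (∀ v : V, v ≠ 0 → 0 < ω v (J v)) ∧
       (∀ v : V, c (J v) = - J (c v)))) :
    S.Nonempty ∧ ContractibleSpace S := by
  obtain ⟨j, hjj, hjpos, hjc, hjs⟩ :=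
    exists_compatible_real_structure V ω halt hnondeg c hc hanti
  refine ⟨⟨j, (hS j).2 ⟨hjj, hjpos, hjc⟩⟩, ?_⟩
  haveI : CompleteSpace V := FiniteDimensional.complete ℝ V
  have hunit : ∀ M : V →L[ℝ] V, (∀ v, M v = 0 → v = 0) → IsUnit M := by
    intro M hM
    rw [ContinuousLinearMap.isUnit_iff_bijective]
    have hi : Function.Injective (M : V →ₗ[ℝ] V) := (injective_iff_map_eq_zero _).2 hM
    exact ⟨hi, LinearMap.injective_iff_surjective.1 hi⟩
  have hinv : ∀ M : V →L[ℝ] V, IsUnit M → ∀ v, Ring.inverse M (M v) = v := by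
    intro M hM v
    have := Ring.inverse_mul_cancel M hM
    exact congrArg (fun f : V →L[ℝ] V => f v) this
  have hsurj : ∀ M : V →L[ℝ] V, IsUnit M → ∀ v, ∃ x, M x = v := by
    intro M hM v
    exact (ContinuousLinearMap.isUnit_iff_bijective.1 hM).2 v
  let K : Set (V →L[ℝ] V) := {A | (∀ v, A (j v) = - j (A v)) ∧ (∀ v, A (c v) = c (A v)) ∧
    ∀ w, w ≠ 0 → ω (A w) (j (A w)) < ω w (j w)}
  have hjnn : ∀ v, 0 ≤ ω v (j v) := by
    intro v
    by_cases h : v = 0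
    · simp [h]
    · exact (hjpos v h).le
  have hKcontr : ContractibleSpace K := by
    have hst : StarConvex ℝ (0 : V →L[ℝ] V) K := by
      rw [starConvex_zero_iff]
      rintro A ⟨h1, h2, h3⟩ t ht0 ht1
      refine ⟨fun v => ?_, fun v => ?_, fun w hw => ?_⟩
      · simp [h1]
      · simp [h2]
      · have := h3 w hw
        have h4 := hjnn (A w)
        simp only [ContinuousLinearMap.smul_apply, map_smul, LinearMap.smul_apply, smul_eq_mul]
        have : t * t ≤ 1 := by nlinarith
        nlinarith
    exact hst.contractibleSpace ⟨0, by simp, by simp, by simpa using hjpos⟩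
  -- the units
  have hu1 : ∀ J ∈ S, IsUnit (1 - j * J) := by
    intro J hJ
    apply hunit
    intro v hv
    by_contra hne
    have h1 := ((hS J).1 hJ).2.1 v hne
    have h2 := hjpos v hne
    have h3 : v = j (J v) := by simpa [sub_eq_zero] using hv
    have h4 : j v = - J v := by conv_lhs => rw [h3, hjj]
    rw [h4, map_neg] at h2
    linarith
  have hu2 : ∀ A ∈ K, IsUnit (1 + A) := by
    intro A hA
    apply hunit
    intro v hv
    by_contra hne
    have h1 := hA.2.2 v hne
    have h3 : A v = -v := by
      have : v + A v = 0 := by simpa using hv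
      exact (neg_eq_of_add_eq_zero_right this).symm
    rw [h3] at h1
    simp at h1
  let Ψ : (V →L[ℝ] V) → (V →L[ℝ] V) := fun J => (1 + j * J) * Ring.inverse (1 - j * J)
  let Φ : (V →L[ℝ] V) → (V →L[ℝ] V) := fun A => j * (1 - A) * Ring.inverse (1 + A)
  have hΨ : ∀ J ∈ S, ∀ x, Ψ J (x - j (J x)) = x + j (J x) := by
    intro J hJ x
    have h := hinv _ (hu1 J hJ) x
    have h' : Ring.inverse (1 - j * J) (x - j (J x)) = x := h
    change (1 + j * J) (Ring.inverse (1 - j * J) (x - j (J x))) = _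
    rw [h']
    rfl
  have hΨs : ∀ J ∈ S, ∀ v, ∃ x, x - j (J x) = v := by
    intro J hJ v
    obtain ⟨x, hx⟩ := hsurj _ (hu1 J hJ) v
    exact ⟨x, by simpa using hx⟩
  have hΦ : ∀ A ∈ K, ∀ x, Φ A (x + A x) = j (x - A x) := by
    intro A hA x
    have h := hinv _ (hu2 A hA) x
    have h' : Ring.inverse (1 + A) (x + A x) = x := h
    change (j * (1 - A)) (Ring.inverse (1 + A) (x + A x)) = _
    rw [h']
    rfl
  have hΦs : ∀ A ∈ K, ∀ v, ∃ x, x + A x = v := by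
    intro A hA v
    obtain ⟨x, hx⟩ := hsurj _ (hu2 A hA) v
    exact ⟨x, by simpa using hx⟩
  have hΨm : ∀ J ∈ S, Ψ J ∈ K := by
    intro J hJ
    obtain ⟨hJ1, hJ2, hJ3⟩ := (hS J).1 hJ
    refine ⟨fun v => ?_, fun v => ?_, fun v hv => ?_⟩
    · obtain ⟨x, rfl⟩ := hΨs J hJ v
      rw [hΨ J hJ]
      have h : j (x - j (J x)) = J x - j (J (J x)) := by
        rw [map_sub, hjj, hJ1]; simp [add_comm]
      rw [h, hΨ J hJ, hJ1, map_add, hjj]; simp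
    · obtain ⟨x, rfl⟩ := hΨs J hJ v
      rw [hΨ J hJ]
      have h : c (x - j (J x)) = c x - j (J (c x)) := by
        rw [map_sub, hjc, hJ3]; simp
      rw [h, hΨ J hJ, map_add, hjc, hJ3]; simp
    · obtain ⟨x, rfl⟩ := hΨs J hJ v
      rw [hΨ J hJ]
      have hx : x ≠ 0 := by rintro rfl; simp at hv
      have h1 := hJ2 x hx
      have h2 := hjs (j (J x)) x
      simp only [map_add, map_sub, LinearMap.add_apply, LinearMap.sub_apply, hjj, map_neg] at h2 ⊢
      linarith
  have hΦm : ∀ A ∈ K, Φ A ∈ S := by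
    intro A hA
    obtain ⟨hA1, hA2, hA3⟩ := id hA
    rw [hS]
    refine ⟨fun v => ?_, fun v hv => ?_, fun v => ?_⟩
    · obtain ⟨x, rfl⟩ := hΦs A hA v
      rw [hΦ A hA]
      have h : j (x - A x) = j x + A (j x) := by rw [hA1, map_sub]; abel
      rw [h, hΦ A hA, hA1, sub_neg_eq_add, ← map_add, hjj]
    · obtain ⟨x, rfl⟩ := hΦs A hA v
      have hx : x ≠ 0 := by rintro rfl; simp at hv
      have h1 := hA3 x hx
      have h2 := hjs (A x) x
      rw [hΦ A hA]
      simp only [map_add, map_sub, LinearMap.add_apply] 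
      linarith
    · obtain ⟨x, rfl⟩ := hΦs A hA v
      have h : c (x + A x) = c x + A (c x) := by rw [map_add, hA2]
      rw [h, hΦ A hA, hΦ A hA, hjc, map_sub, hA2]
  have hΦΨ : ∀ J ∈ S, Φ (Ψ J) = J := by
    intro J hJ
    ext v
    have h := hΦ _ (hΨm J hJ) ((1/2 : ℝ) • (v - j (J v)))
    rw [map_smul, hΨ J hJ] at h
    have e1 : (1/2 : ℝ) • (v - j (J v)) + (1/2 : ℝ) • (v + j (J v)) = v := by module
    have e2 : (1/2 : ℝ) • (v - j (J v)) - (1/2 : ℝ) • (v + j (J v)) = - j (J v) := by module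
    rw [e1, e2, map_neg, hjj, neg_neg] at h
    exact h
  have hinvc : ∀ M : V →L[ℝ] V, IsUnit M → ContinuousAt Ring.inverse M := by
    rintro _ ⟨u, rfl⟩
    exact NormedRing.inverse_continuousAt u
  have hΨc : ContinuousOn Ψ S := by
    intro J hJ
    apply ContinuousAt.continuousWithinAt
    refine ContinuousAt.mul (by fun_prop) ?_
    exact ContinuousAt.comp (f := fun J : V →L[ℝ] V => 1 - j * J) (hinvc _ (hu1 J hJ)) (by fun_prop)
  have hΦc : ContinuousOn Φ K := by
    intro A hA
    apply ContinuousAt.continuousWithinAt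
    refine ContinuousAt.mul (by fun_prop) ?_
    exact ContinuousAt.comp (f := fun A : V →L[ℝ] V => 1 + A) (hinvc _ (hu2 A hA)) (by fun_prop)
  let f : C(S, K) := ⟨_, hΨc.mapsToRestrict hΨm⟩
  let g : C(K, S) := ⟨_, hΦc.mapsToRestrict hΦm⟩
  have hgf : g.comp ((ContinuousMap.id K).comp f) = ContinuousMap.id S := by
    ext1 J
    exact Subtype.ext (hΦΨ J J.2)
  rw [contractible_iff_id_nullhomotopic, ← hgf]
  exact ((id_nullhomotopic K).comp_left f).comp_right g
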